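/- For every integer y ≥ 1 and real x large enough (in terms of δ, M, K, ξ) one has E[#(S_z(b) ∩ [1,y])] = σ_z·y exactly, and there exist C > 0 and x₀ (depending only on δ, M, K, ξ) such that for all x ≥ x₀, |E[(#(S_z(b) ∩ [1,y]))²] − (σ_z y)²| ≤ C·(σ_z y)²/ln y, where y and z are as in the setup. -/

import Mathlib

open scoped Classical

noncomputable def yy (δ x : ℝ) : ℕ := ⌈x * Real.log x ^ δ⌉₊

noncomputable def zz (δ x : ℝ) : ℝ :=
  (yy δ x : ℝ) * Real.log (Real.log x) ^ 2 / Real.log x ^ (1/2 : ℝ)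

noncomputable def primesUpTo (t : ℝ) : Finset ℕ :=
  (Finset.range (⌊t⌋₊ + 1)).filter fun p => p.Prime ∧ (p : ℝ) ≤ t

noncomputable def PP (t : ℝ) : ℕ := ∏ p ∈ primesUpTo t, p

noncomputable def sigUpTo (t : ℝ) : ℝ := ∏ p ∈ primesUpTo t, (1 - 1 / (p : ℝ))

noncomputable def primesBetween (w t : ℝ) : Finset ℕ :=
  (Finset.range (⌊t⌋₊ + 1)).filter fun p => p.Prime ∧ w < (p : ℝ) ∧ (p : ℝ) ≤ t

noncomputable def sigBetween (w t : ℝ) : ℝ := ∏ p ∈ primesBetween w t, (1 - 1 / (p : ℝ))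

def inS (t : ℝ) (b n : ℤ) : Prop :=
  ∀ p : ℕ, p.Prime → (p : ℝ) ≤ t → ¬ ((p : ℤ) ∣ (n - b))

def inSBetween (w t : ℝ) (b n : ℤ) : Prop :=
  ∀ p : ℕ, p.Prime → w < (p : ℝ) → (p : ℝ) ≤ t → ¬ ((p : ℤ) ∣ (n - b))

noncomputable def countS (t : ℝ) (b lo hi : ℤ) : ℕ :=
  ((Finset.Icc lo hi).filter (inS t b)).card

noncomputable def EE (δ x : ℝ) (g : ℤ → ℝ) : ℝ :=
  (1 / (PP (zz δ x) : ℝ)) * ∑ b ∈ Finset.range (PP (zz δ x)), g (b : ℤ)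

def frakH (δ ξ x : ℝ) : Set ℝ :=
  {H | ∃ j : ℕ, H = ξ ^ j ∧ 2 * (yy δ x : ℝ) / x ≤ H ∧ H ≤ (yy δ x : ℝ) / (ξ * zz δ x)}

def frakH1 (δ ξ x : ℝ) : Set ℝ :=
  {H | ∃ j : ℕ, Even j ∧ H = ξ ^ j ∧ 2 * (yy δ x : ℝ) / x ≤ H ∧ H ≤ (yy δ x : ℝ) / (ξ * zz δ x)}

def frakH2 (δ ξ x : ℝ) : Set ℝ :=
  {H | ∃ j : ℕ, Odd j ∧ H = ξ ^ j ∧ 2 * (yy δ x : ℝ) / x ≤ H ∧ H ≤ (yy δ x : ℝ) / (ξ * zz δ x)}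

noncomputable def QH (δ ξ x H : ℝ) : Finset ℕ :=
  (Finset.range (⌊(yy δ x : ℝ) / H⌋₊ + 1)).filter fun q =>
    q.Prime ∧ (yy δ x : ℝ) / (ξ * H) < (q : ℝ) ∧ (q : ℝ) ≤ (yy δ x : ℝ) / H

noncomputable def Hq (δ ξ x : ℝ) (q : ℕ) : ℝ :=
  if h : ∃ H ∈ frakH δ ξ x, (yy δ x : ℝ) / (ξ * H) < (q : ℝ) ∧ (q : ℝ) ≤ (yy δ x : ℝ) / H
  then h.choose else 1

noncomputable def APset (M : ℝ) (K : ℕ) (b : ℤ) (H : ℝ) (q : ℕ) (n : ℤ) : Finset ℤ :=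
  ((Finset.Icc 1 ⌊(K : ℝ) * H⌋₊).image fun h : ℕ => n + (q : ℤ) * (h : ℤ)).filter (inS (H ^ M) b)

noncomputable def lam (M zv : ℝ) (K : ℕ) (b : ℤ) (H : ℝ) (q : ℕ) (n : ℤ) : ℝ :=
  if ∀ m ∈ APset M K b H q n, inSBetween (H ^ M) zv b m
  then sigBetween (H ^ M) zv ^ (-((APset M K b H q n).card : ℤ))
  else 0

noncomputable def APsetStar (M : ℝ) (K : ℕ) (N b : ℤ) (H : ℝ) (q : ℕ) (n : ℤ) : Finset ℤ :=
  ((Finset.Icc 1 ⌊(K : ℝ) * H⌋₊).image fun h : ℕ => n - (q : ℤ) * (h : ℤ)).filter (inS (H ^ M) (-N - b))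

noncomputable def lamStar (M zv : ℝ) (K : ℕ) (N b : ℤ) (H : ℝ) (q : ℕ) (n : ℤ) : ℝ :=
  if ∀ m ∈ APsetStar M K N b H q n, inSBetween (H ^ M) zv (-N - b) m
  then sigBetween (H ^ M) zv ^ (-((APsetStar M K N b H q n).card : ℤ))
  else 0

/-!
By the Chinese remainder theorem, averaging over `b` modulo `∏ q` makes the conditions modulo the
different `q` independent. For fixed `m` and `n`, a random class mod `q` avoids both with
probability `1_{q ∣ m - n} / q + (1 - 2 / q)`. Expanding the product of these over subsets `t` of
the moduli, `E[#²]` becomes a combination with nonnegative weights `w t` of the number of pairs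
`(m, n)` in the interval with `∏_{q ∈ t} q ∣ m - n`. For an interval of length `y` this number is
`y² / ∏_{q ∈ t} q` up to an error of at most `y`. Since `1 / q² + (1 - 2 / q) = (1 - 1 / q)²` and
`1 / q + (1 - 2 / q) = 1 - 1 / q`, the main terms sum to `(σ y)²` and the errors to at most `σ y`,
so the error is at most the mean. It then suffices that `log y ≪ σ y`, for which the elementary
bound `σ ≫ 1 / √y` is enough and Mertens' theorem is not needed.
-/

section ResidueAverages

open Finset Function
open scoped BigOperators

theorem expect_range_mul_of_periodic {R : Type*} [Semifield R] [CharZero R] {q r : ℕ}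
    (hqr : q.Coprime r) {f g : ℕ → R} (hf : Periodic f q) (hg : Periodic g r) :
    𝔼 b ∈ range (q * r), f b * g b = (𝔼 b ∈ range q, f b) * 𝔼 b ∈ range r, g b := by
  rw [expect_mul_expect, ← expect_product']
  refine expect_nbij' (fun b ↦ (b % q, b % r)) (fun u ↦ Nat.chineseRemainder hqr u.1 u.2)
    (fun b hb ↦ ?_) (fun u hu ↦ ?_) (fun b hb ↦ ?_) (fun u hu ↦ ?_) (fun b _ ↦ ?_)
  · have hpos := (Nat.zero_le b).trans_lt (mem_range.1 hb)
    exact mem_product.2 ⟨mem_range.2 (Nat.mod_lt _ (Nat.pos_of_mul_pos_right hpos)),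
      mem_range.2 (Nat.mod_lt _ (Nat.pos_of_mul_pos_left hpos))⟩
  · obtain ⟨hu₁, hu₂⟩ := mem_product.1 hu
    exact mem_range.2 (Nat.chineseRemainder_lt_mul hqr _ _
      (Nat.ne_zero_of_lt (mem_range.1 hu₁)) (Nat.ne_zero_of_lt (mem_range.1 hu₂)))
  · have hmod := Nat.chineseRemainder_modEq_unique hqr (Nat.mod_modEq b q).symm
      (Nat.mod_modEq b r).symm
    have hpos := (Nat.zero_le b).trans_lt (mem_range.1 hb)
    exact (hmod.eq_of_lt_of_lt (mem_range.1 hb) (Nat.chineseRemainder_lt_mul hqr _ _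
      (Nat.pos_of_mul_pos_right hpos).ne' (Nat.pos_of_mul_pos_left hpos).ne')).symm
  · obtain ⟨hu₁, hu₂⟩ := mem_product.1 hu
    have hmod := (Nat.chineseRemainder hqr u.1 u.2).2
    exact Prod.ext (Nat.mod_eq_of_modEq hmod.1 (mem_range.1 hu₁))
      (Nat.mod_eq_of_modEq hmod.2 (mem_range.1 hu₂))
  · rw [hf.map_mod_nat, hg.map_mod_nat]

theorem expect_range_prod_of_periodic {R : Type*} [Semifield R] [CharZero R] {s : Finset ℕ}
    (hs : (s : Set ℕ).Pairwise Nat.Coprime) {f : ℕ → ℕ → R} (hf : ∀ q ∈ s, Periodic (f q) q) :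
    𝔼 b ∈ range (∏ q ∈ s, q), ∏ q ∈ s, f q b = ∏ q ∈ s, 𝔼 b ∈ range q, f q b := by
  induction s using Finset.induction_on with
  | empty => simp
  | insert r s hr ih =>
    rw [coe_insert, Set.pairwise_insert_of_symm_of_notMem hr] at hs
    have hcop : r.Coprime (∏ q ∈ s, q) := Nat.Coprime.prod_right hs.2
    have hper : Periodic (fun b ↦ ∏ q ∈ s, f q b) (∏ q ∈ s, q) := fun b ↦
      prod_congr rfl fun q hq ↦ by
        obtain ⟨c, hc⟩ := dvd_prod_of_mem (fun q : ℕ ↦ q) hq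
        rw [hc, mul_comm]
        exact (hf q (mem_insert_of_mem hq)).nat_mul c b
    simp only [prod_insert hr]
    rw [expect_range_mul_of_periodic hcop (hf r (mem_insert_self r s)) hper,
      ih hs.1 fun q hq ↦ hf q (mem_insert_of_mem hq)]

theorem expect_range_ite_dvd_sub {q : ℕ} (hq : q ≠ 0) (m : ℤ) :
    𝔼 b ∈ range q, (if (q : ℤ) ∣ m - b then (1 : ℝ) else 0) = 1 / q := by
  have hq' : (q : ℤ) ≠ 0 := Nat.cast_ne_zero.2 hq
  have hnonneg := Int.emod_nonneg m hq'
  have hlt := Int.emod_lt_of_pos m (by omega : (0 : ℤ) < q)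
  have hroot : ∀ b ∈ range q, (q : ℤ) ∣ m - b ↔ b = (m % q).toNat := fun b hb ↦ by
    have hb' : (b : ℤ) % q = b := Int.emod_eq_of_lt (by omega) (by have := mem_range.1 hb; omega)
    rw [← Int.modEq_iff_dvd, Int.ModEq, hb']
    omega
  have hmem : (m % q).toNat ∈ range q := mem_range.2 (by omega)
  rw [expect_eq_sum_div_card, card_range,
    sum_congr rfl fun b hb ↦ if_congr (hroot b hb) rfl rfl, sum_ite_eq', if_pos hmem]

theorem expect_range_ite_not_dvd_sub_and {q : ℕ} (hq : q ≠ 0) (m n : ℤ) :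
    𝔼 b ∈ range q, (if ¬ (q : ℤ) ∣ m - b ∧ ¬ (q : ℤ) ∣ n - b then (1 : ℝ) else 0) =
      (if (q : ℤ) ∣ m - n then 1 / (q : ℝ) else 0) + (1 - 2 / q) := by
  have hincl_excl : ∀ b : ℕ,
      (if ¬ (q : ℤ) ∣ m - b ∧ ¬ (q : ℤ) ∣ n - b then (1 : ℝ) else 0) =
        1 - (if (q : ℤ) ∣ m - b then 1 else 0) - (if (q : ℤ) ∣ n - b then 1 else 0) +
          (if (q : ℤ) ∣ m - n then 1 else 0) * (if (q : ℤ) ∣ m - b then 1 else 0) := fun b ↦ by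
    have hdvd (hm : (q : ℤ) ∣ m - b) : (q : ℤ) ∣ m - n ↔ (q : ℤ) ∣ n - b := by
      rw [← dvd_sub_right hm, sub_sub_sub_cancel_left]
    by_cases hm : (q : ℤ) ∣ m - b <;> by_cases hn : (q : ℤ) ∣ n - b <;> simp [hm, hn, hdvd]
  simp only [hincl_excl, expect_add_distrib, expect_sub_distrib, ← mul_expect,
    expect_range_ite_dvd_sub hq, expect_const (nonempty_range_iff.2 hq)]
  split_ifs <;> ring

end ResidueAverages

section Sieve

open Finset Function
open scoped BigOperators

/-- The elements of `I` outside the residue class of `b` modulo every `q ∈ s`. When `s` is the set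
of primes up to `t` and `I = [1, y]`, this is the set `S_t(b) ∩ [1, y]`. -/
def sifted (s : Finset ℕ) (I : Finset ℤ) (b : ℤ) : Finset ℤ :=
  {n ∈ I | ∀ q ∈ s, ¬ (q : ℤ) ∣ n - b}

variable {s : Finset ℕ}

theorem expect_range_ite_forall_not_dvd_sub_and (hs : (s : Set ℕ).Pairwise Nat.Coprime)
    (hs₀ : 0 ∉ s) (m n : ℤ) :
    𝔼 b ∈ range (∏ q ∈ s, q),
        (if ∀ q ∈ s, ¬ (q : ℤ) ∣ m - b ∧ ¬ (q : ℤ) ∣ n - b then (1 : ℝ) else 0) =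
      ∏ q ∈ s, ((if (q : ℤ) ∣ m - n then 1 / (q : ℝ) else 0) + (1 - 2 / q)) := by
  have hper (k : ℤ) (q b : ℕ) : (q : ℤ) ∣ k - (b + q : ℕ) ↔ (q : ℤ) ∣ k - b := by
    rw [Nat.cast_add, ← sub_sub, dvd_sub_self_right]
  calc _ = 𝔼 b ∈ range (∏ q ∈ s, q), ∏ q ∈ s,
        (if ¬ (q : ℤ) ∣ m - b ∧ ¬ (q : ℤ) ∣ n - b then (1 : ℝ) else 0) := by
        simp only [prod_ite_zero, prod_const_one]
    _ = ∏ q ∈ s, 𝔼 b ∈ range q,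
        (if ¬ (q : ℤ) ∣ m - b ∧ ¬ (q : ℤ) ∣ n - b then (1 : ℝ) else 0) :=
      expect_range_prod_of_periodic hs fun q _ b ↦ by simp only [hper]
    _ = _ := prod_congr rfl fun q hq ↦
      expect_range_ite_not_dvd_sub_and (ne_of_mem_of_not_mem hq hs₀) m n

theorem expect_card_sifted (hs : (s : Set ℕ).Pairwise Nat.Coprime) (hs₀ : 0 ∉ s)
    (I : Finset ℤ) :
    𝔼 b ∈ range (∏ q ∈ s, q), (#(sifted s I b) : ℝ) = #I * ∏ q ∈ s, (1 - 1 / (q : ℝ)) := by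
  have hpoint (n : ℤ) : 𝔼 b ∈ range (∏ q ∈ s, q),
      (if ∀ q ∈ s, ¬ (q : ℤ) ∣ n - b then (1 : ℝ) else 0) = ∏ q ∈ s, (1 - 1 / (q : ℝ)) := by
    have h := expect_range_ite_forall_not_dvd_sub_and hs hs₀ n n
    simp only [and_self, sub_self, dvd_zero, if_true] at h
    rw [h]
    exact prod_congr rfl fun q _ ↦ by ring
  simp only [sifted, natCast_card_filter, expect_sum_comm, hpoint, sum_const, nsmul_eq_mul]

theorem expect_card_sifted_sq (hs : (s : Set ℕ).Pairwise Nat.Coprime) (hs₀ : 0 ∉ s)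
    (I : Finset ℤ) :
    𝔼 b ∈ range (∏ q ∈ s, q), (#(sifted s I b) : ℝ) ^ 2 =
      ∑ n ∈ I, ∑ m ∈ I,
        ∏ q ∈ s, ((if (q : ℤ) ∣ m - n then 1 / (q : ℝ) else 0) + (1 - 2 / q)) := by
  have hsq (b : ℕ) : (#(sifted s I b) : ℝ) ^ 2 = ∑ n ∈ I, ∑ m ∈ I,
      (if ∀ q ∈ s, ¬ (q : ℤ) ∣ m - b ∧ ¬ (q : ℤ) ∣ n - b then (1 : ℝ) else 0) := by
    simp only [sifted, natCast_card_filter, sq, sum_mul_sum, mul_ite, mul_one, mul_zero,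
      ← ite_and, forall₂_and]
  simp only [hsq, expect_sum_comm, expect_range_ite_forall_not_dvd_sub_and hs hs₀]

theorem natCast_prod_dvd_iff (hs : (s : Set ℕ).Pairwise Nat.Coprime) (k : ℤ) :
    ((∏ q ∈ s, q : ℕ) : ℤ) ∣ k ↔ ∀ q ∈ s, (q : ℤ) ∣ k := by
  rw [Nat.cast_prod]
  exact ⟨fun h q hq ↦ (dvd_prod_of_mem _ hq).trans h, prod_dvd_of_coprime
    fun p hp q hq hpq ↦ Nat.isCoprime_iff_coprime.2 (hs hp hq hpq)⟩

theorem expect_card_sifted_sq_eq_sum_powerset (hs : (s : Set ℕ).Pairwise Nat.Coprime)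
    (hs₀ : 0 ∉ s) (I : Finset ℤ) :
    𝔼 b ∈ range (∏ q ∈ s, q), (#(sifted s I b) : ℝ) ^ 2 =
      ∑ t ∈ s.powerset, ((∏ q ∈ t, 1 / (q : ℝ)) * ∏ q ∈ s \ t, (1 - 2 / (q : ℝ))) *
        ∑ n ∈ I, (#{m ∈ I | ((∏ q ∈ t, q : ℕ) : ℤ) ∣ m - n} : ℝ) := by
  have hexpand (m n : ℤ) :
      ∏ q ∈ s, ((if (q : ℤ) ∣ m - n then 1 / (q : ℝ) else 0) + (1 - 2 / q)) =
        ∑ t ∈ s.powerset, ((∏ q ∈ t, 1 / (q : ℝ)) * ∏ q ∈ s \ t, (1 - 2 / (q : ℝ))) *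
          if ((∏ q ∈ t, q : ℕ) : ℤ) ∣ m - n then 1 else 0 := by
    rw [prod_add]
    refine sum_congr rfl fun t ht ↦ ?_
    rw [prod_ite_zero, mul_ite, mul_one, mul_zero, ite_mul, zero_mul]
    exact if_congr (natCast_prod_dvd_iff
      (hs.mono (coe_subset.2 (mem_powerset.1 ht))) _).symm rfl rfl
  simp only [expect_card_sifted_sq hs hs₀, hexpand, natCast_card_filter, mul_sum]
  rw [sum_comm (s := s.powerset)]
  exact sum_congr rfl fun _ _ ↦ sum_comm

theorem abs_card_Ioc_filter_dvd_sub_sub_le {a b : ℤ} (hab : a ≤ b) {d : ℕ} (hd : 0 < d) (n : ℤ) :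
    |(#{m ∈ Ioc a b | (d : ℤ) ∣ m - n} : ℝ) - (b - a) / d| ≤ 1 := by
  set u : ℚ := (b - n) / (d : ℤ)
  set v : ℚ := (a - n) / (d : ℤ)
  have hvu : ⌊v⌋ ≤ ⌊u⌋ := by
    simp only [u, v]
    gcongr
  have hcard : (#{m ∈ Ioc a b | (d : ℤ) ∣ m - n} : ℤ) = ⌊u⌋ - ⌊v⌋ := by
    rw [← max_eq_left (sub_nonneg.2 hvu), ← Int.Ioc_filter_modEq_card a b (Nat.cast_pos.2 hd) n]
    simp only [Int.modEq_comm (a := _) (b := n), Int.modEq_iff_dvd]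
  have hfract : (#{m ∈ Ioc a b | (d : ℤ) ∣ m - n} : ℚ) - (b - a) / d =
      Int.fract v - Int.fract u := by
    have hcard' : (#{m ∈ Ioc a b | (d : ℤ) ∣ m - n} : ℚ) = ⌊u⌋ - ⌊v⌋ := by exact_mod_cast hcard
    rw [hcard', ← Int.self_sub_floor, ← Int.self_sub_floor]
    simp only [u, v, Int.cast_natCast]
    ring
  have hQ : |(#{m ∈ Ioc a b | (d : ℤ) ∣ m - n} : ℚ) - (b - a) / d| ≤ 1 := by
    rw [hfract]
    exact (abs_sub_lt_of_nonneg_of_lt (Int.fract_nonneg v) (Int.fract_lt_one v)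
      (Int.fract_nonneg u) (Int.fract_lt_one u)).le
  exact_mod_cast (Rat.cast_le (K := ℝ)).2 hQ

theorem abs_sum_card_Ioc_filter_dvd_sub_sub_le {a b : ℤ} (hab : a ≤ b) {d : ℕ} (hd : 0 < d) :
    |∑ n ∈ Ioc a b, (#{m ∈ Ioc a b | (d : ℤ) ∣ m - n} : ℝ) - (b - a) ^ 2 / d| ≤ b - a := by
  have hcard : (#(Ioc a b) : ℝ) = b - a := by
    rw [← Int.cast_natCast, Int.card_Ioc_of_le a b hab, Int.cast_sub]
  calc |∑ n ∈ Ioc a b, (#{m ∈ Ioc a b | (d : ℤ) ∣ m - n} : ℝ) - (b - a) ^ 2 / d|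
      = |∑ n ∈ Ioc a b, ((#{m ∈ Ioc a b | (d : ℤ) ∣ m - n} : ℝ) - (b - a) / d)| := by
        rw [sum_sub_distrib, sum_const, nsmul_eq_mul, hcard, sq, mul_div_assoc]
    _ ≤ ∑ n ∈ Ioc a b, |(#{m ∈ Ioc a b | (d : ℤ) ∣ m - n} : ℝ) - (b - a) / d| :=
        abs_sum_le_sum_abs _ _
    _ ≤ ∑ _n ∈ Ioc a b, (1 : ℝ) :=
        sum_le_sum fun n _ ↦ abs_card_Ioc_filter_dvd_sub_sub_le hab hd n
    _ = b - a := by rw [sum_const, nsmul_one, hcard]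

theorem abs_expect_card_sifted_Ioc_sq_sub_le (hs : (s : Set ℕ).Pairwise Nat.Coprime)
    (hs₂ : ∀ q ∈ s, 2 ≤ q) {a b : ℤ} (hab : a ≤ b) :
    |𝔼 c ∈ range (∏ q ∈ s, q), (#(sifted s (Ioc a b) c) : ℝ) ^ 2 -
      ((b - a) * ∏ q ∈ s, (1 - 1 / (q : ℝ))) ^ 2| ≤ (b - a) * ∏ q ∈ s, (1 - 1 / (q : ℝ)) := by
  have hs₀ : 0 ∉ s := fun h ↦ absurd (hs₂ 0 h) (by norm_num)
  set w : Finset ℕ → ℝ := fun t ↦ (∏ q ∈ t, 1 / (q : ℝ)) * ∏ q ∈ s \ t, (1 - 2 / (q : ℝ)) with hw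
  have hw_nonneg : ∀ t ∈ s.powerset, 0 ≤ w t := fun t _ ↦
    mul_nonneg (prod_nonneg fun q _ ↦ by positivity) <| prod_nonneg fun q hq ↦ by
      have hq₂ : (2 : ℝ) ≤ q := by exact_mod_cast hs₂ q (mem_sdiff.1 hq).1
      exact sub_nonneg.2 (div_le_one_of_le₀ hq₂ (by positivity))
  have hmean : (b - a) * ∏ q ∈ s, (1 - 1 / (q : ℝ)) = ∑ t ∈ s.powerset, w t * (b - a) := by
    rw [← sum_mul, ← prod_add, mul_comm]
    exact congrArg (· * _) (prod_congr rfl fun q _ ↦ by ring)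
  have hmean_sq : ((b - a) * ∏ q ∈ s, (1 - 1 / (q : ℝ))) ^ 2 =
      ∑ t ∈ s.powerset, w t * ((b - a) ^ 2 / (∏ q ∈ t, q : ℕ)) := by
    have hfactor : ∀ q ∈ s, (1 - 1 / (q : ℝ)) ^ 2 = 1 / (q : ℝ) * (1 / q) + (1 - 2 / q) :=
      fun q _ ↦ by ring
    rw [mul_pow, ← prod_pow, prod_congr rfl hfactor, prod_add, mul_sum]
    refine sum_congr rfl fun t _ ↦ ?_
    simp only [hw, prod_mul_distrib, prod_div_distrib, prod_const_one, Nat.cast_prod]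
    ring
  rw [expect_card_sifted_sq_eq_sum_powerset hs hs₀, hmean_sq, hmean, ← sum_sub_distrib]
  refine (abs_sum_le_sum_abs _ _).trans (sum_le_sum fun t ht ↦ ?_)
  have hprod_pos : 0 < ∏ q ∈ t, q :=
    prod_pos fun q hq ↦ two_pos.trans_le (hs₂ q (mem_powerset.1 ht hq))
  rw [← mul_sub, abs_mul, abs_of_nonneg (hw_nonneg t ht)]
  exact mul_le_mul_of_nonneg_left (abs_sum_card_Ioc_filter_dvd_sub_sub_le hab hprod_pos)
    (hw_nonneg t ht)

end Sieve

section PrimeProducts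

open Finset
open scoped BigOperators

theorem one_div_le_prod_primesBelow_sq (k : ℕ) :
    1 / (4 * (2 * (k : ℝ) + 1)) ≤ (∏ p ∈ (2 * k + 3).primesBelow, (1 - 1 / (p : ℝ))) ^ 2 := by
  -- Beyond `2` only odd `n` contribute, and `(n - 2) / n ≤ (1 - 1 / n) ^ 2` telescopes over them.
  induction k with
  | zero =>
    have h : Nat.primesBelow 3 = {2} := by decide
    norm_num [h]
  | succ k ih =>
    have hbelow : Nat.primesBelow (2 * (k + 1) + 3) = Nat.primesBelow (2 * k + 3 + 1) := by
      have heven : ¬ (2 * k + 4).Prime := fun h ↦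
        absurd (h.even_iff.1 ⟨k + 2, by ring⟩) (by omega)
      rw [show 2 * (k + 1) + 3 = 2 * k + 4 + 1 by ring, Nat.primesBelow_succ, if_neg heven]
    have hstep : (2 * (k : ℝ) + 1) / (2 * k + 3) ≤ (1 - 1 / ((2 * k + 3 : ℕ) : ℝ)) ^ 2 := by
      have hsq : (1 - 1 / ((2 * k + 3 : ℕ) : ℝ)) ^ 2 =
          (2 * (k : ℝ) + 1) / (2 * k + 3) + (1 / (2 * k + 3)) ^ 2 := by
        push_cast
        field_simp
        ring
      exact hsq ▸ le_add_of_nonneg_right (sq_nonneg _)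
    have hsplit : 1 / (4 * (2 * ((k + 1 : ℕ) : ℝ) + 1)) =
        (2 * (k : ℝ) + 1) / (2 * k + 3) * (1 / (4 * (2 * k + 1))) := by
      push_cast
      field_simp
      ring
    rw [hbelow, Nat.primesBelow_succ, hsplit]
    split_ifs
    · rw [prod_insert (Nat.notMem_primesBelow _), mul_pow]
      gcongr
    · exact (mul_le_of_le_one_left (by positivity)
        (div_le_one_of_le₀ (by linarith) (by positivity))).trans ih

variable {s : Finset ℕ}

theorem pairwise_coprime_of_forall_prime (hs : ∀ p ∈ s, p.Prime) :
    (s : Set ℕ).Pairwise Nat.Coprime :=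
  fun p hp q hq hpq ↦ (Nat.coprime_primes (hs p hp) (hs q hq)).2 hpq

theorem one_div_four_mul_sqrt_le_prod_primes (hs : ∀ p ∈ s, p.Prime) {y : ℕ} (hy : 1 ≤ y)
    (hsy : ∀ p ∈ s, p ≤ y) : 1 / (4 * √(y : ℝ)) ≤ ∏ p ∈ s, (1 - 1 / (p : ℝ)) := by
  have hfactor_nonneg {p : ℕ} : 0 ≤ 1 - 1 / (p : ℝ) :=
    sub_nonneg.2 (one_div (p : ℝ) ▸ Nat.cast_inv_le_one p)
  have hsub : s ⊆ (2 * y + 3).primesBelow := fun p hp ↦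
    Nat.mem_primesBelow.2 ⟨by linarith [hsy p hp], hs p hp⟩
  have hy' : (1 : ℝ) ≤ y := by exact_mod_cast hy
  calc 1 / (4 * √(y : ℝ)) ≤ ∏ p ∈ (2 * y + 3).primesBelow, (1 - 1 / (p : ℝ)) := by
        refine le_of_sq_le_sq ?_ (prod_nonneg fun p _ ↦ hfactor_nonneg)
        refine le_trans ?_ (one_div_le_prod_primesBelow_sq y)
        rw [div_pow, mul_pow, Real.sq_sqrt (by positivity), one_pow]
        exact one_div_le_one_div_of_le (by positivity) (by linarith)
    _ ≤ ∏ p ∈ s, (1 - 1 / (p : ℝ)) :=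
        prod_le_prod_of_subset_of_le_one hsub (fun p _ ↦ hfactor_nonneg)
          fun p _ _ ↦ sub_le_self _ (by positivity)

theorem log_le_eight_mul_prod_primes (hs : ∀ p ∈ s, p.Prime) {y : ℕ} (hsy : ∀ p ∈ s, p ≤ y) :
    Real.log y ≤ 8 * (y * ∏ p ∈ s, (1 - 1 / (p : ℝ))) := by
  rcases y.eq_zero_or_pos with rfl | hy
  · simp
  calc Real.log y ≤ 2 * √(y : ℝ) := by
        have h := Real.log_le_rpow_div (Nat.cast_nonneg (α := ℝ) y) one_half_pos
        rw [← Real.sqrt_eq_rpow] at h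
        linarith
    _ = 8 * (y * (1 / (4 * √(y : ℝ)))) := by
        field_simp
        rw [Real.sq_sqrt (by positivity)]
        ring
    _ ≤ 8 * (y * ∏ p ∈ s, (1 - 1 / (p : ℝ))) := by
        gcongr
        exact one_div_four_mul_sqrt_le_prod_primes hs hy hsy

theorem abs_expect_card_sifted_primes_sq_sub_le (hs : ∀ p ∈ s, p.Prime) {y : ℕ} (hy : 2 ≤ y)
    (hsy : ∀ p ∈ s, p ≤ y) :
    |𝔼 b ∈ range (∏ p ∈ s, p), (#(sifted s (Ioc 0 y) b) : ℝ) ^ 2 -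
      (y * ∏ p ∈ s, (1 - 1 / (p : ℝ))) ^ 2| ≤
        8 * (y * ∏ p ∈ s, (1 - 1 / (p : ℝ))) ^ 2 / Real.log y := by
  have hvar := abs_expect_card_sifted_Ioc_sq_sub_le (pairwise_coprime_of_forall_prime hs)
    (fun p hp ↦ (hs p hp).two_le) (Nat.cast_nonneg (α := ℤ) y)
  simp only [Int.cast_natCast, Int.cast_zero, sub_zero] at hvar
  have hlog : 0 < Real.log y := Real.log_pos (by exact_mod_cast hy)
  set μ : ℝ := y * ∏ p ∈ s, (1 - 1 / (p : ℝ))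
  have hlog_le : Real.log y ≤ 8 * μ := log_le_eight_mul_prod_primes hs hsy
  refine hvar.trans ((le_div_iff₀ hlog).2 ?_)
  calc μ * Real.log y ≤ μ * (8 * μ) := mul_le_mul_of_nonneg_left hlog_le (by linarith)
    _ = 8 * μ ^ 2 := by ring

end PrimeProducts

section Setup

open Finset Filter Asymptotics
open scoped BigOperators

theorem mem_primesUpTo {t : ℝ} {p : ℕ} : p ∈ primesUpTo t ↔ p.Prime ∧ (p : ℝ) ≤ t := by
  simp only [primesUpTo, mem_filter, mem_range, and_iff_right_iff_imp]
  exact fun h ↦ Nat.lt_succ_of_le (Nat.le_floor h.2)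

theorem countS_one_eq_card_sifted (t : ℝ) (b y : ℤ) :
    countS t b 1 y = #(sifted (primesUpTo t) (Ioc 0 y) b) := by
  rw [countS, sifted, ← Icc_add_one_left_eq_Ioc, zero_add]
  exact congrArg card (filter_congr fun n _ ↦ by simp only [inS, mem_primesUpTo, and_imp])

theorem EE_eq_expect (δ x : ℝ) (g : ℤ → ℝ) :
    EE δ x g = 𝔼 b ∈ range (∏ p ∈ primesUpTo (zz δ x), p), g b := by
  rw [EE, PP, expect_eq_sum_div_card, card_range, one_div_mul_eq_div]

theorem EE_countS (δ x : ℝ) :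
    EE δ x (fun b ↦ (countS (zz δ x) b 1 (yy δ x) : ℝ)) = sigUpTo (zz δ x) * yy δ x := by
  have hcop : (primesUpTo (zz δ x) : Set ℕ).Pairwise Nat.Coprime :=
    pairwise_coprime_of_forall_prime fun p hp ↦ (mem_primesUpTo.1 hp).1
  have hzero : 0 ∉ primesUpTo (zz δ x) := fun h ↦ Nat.not_prime_zero (mem_primesUpTo.1 h).1
  simp only [EE_eq_expect, countS_one_eq_card_sifted]
  rw [expect_card_sifted hcop hzero, Int.card_Ioc, sub_zero, Int.toNat_natCast, sigUpTo, mul_comm]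

theorem abs_EE_countS_sq_sub_le {δ x : ℝ} (hy : 2 ≤ yy δ x) (hzy : zz δ x ≤ yy δ x) :
    |EE δ x (fun b ↦ (countS (zz δ x) b 1 (yy δ x) : ℝ) ^ 2) -
        (sigUpTo (zz δ x) * yy δ x) ^ 2| ≤
      8 * (sigUpTo (zz δ x) * yy δ x) ^ 2 / Real.log (yy δ x) := by
  simp only [EE_eq_expect, countS_one_eq_card_sifted]
  rw [mul_comm, sigUpTo]
  exact abs_expect_card_sifted_primes_sq_sub_le (fun p hp ↦ (mem_primesUpTo.1 hp).1) hy
    fun p hp ↦ by exact_mod_cast (mem_primesUpTo.1 hp).2.trans hzy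

theorem eventually_two_le_yy (δ : ℝ) : ∀ᶠ x in atTop, 2 ≤ yy δ x := by
  have hlittleO : (fun x ↦ Real.log x ^ (-δ)) =o[atTop] fun x : ℝ ↦ x ^ (1 : ℝ) :=
    isLittleO_log_rpow_rpow_atTop (-δ) one_pos
  filter_upwards [hlittleO.bound one_half_pos, eventually_gt_atTop (1 : ℝ)] with x hx hx₁
  have hlog := Real.log_pos hx₁
  rw [Real.rpow_one, Real.rpow_neg hlog.le, Real.norm_of_nonneg (by positivity),
    Real.norm_of_nonneg (by positivity), inv_le_iff_one_le_mul₀ (by positivity)] at hx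
  exact_mod_cast (show (2 : ℝ) ≤ x * Real.log x ^ δ by linarith).trans (Nat.le_ceil _)

theorem eventually_zz_le_yy (δ : ℝ) : ∀ᶠ x in atTop, zz δ x ≤ yy δ x := by
  have hlittleO : (fun u ↦ Real.log u ^ (2 : ℝ)) =o[atTop] fun u : ℝ ↦ u ^ (1 / 2 : ℝ) :=
    isLittleO_log_rpow_rpow_atTop 2 one_half_pos
  filter_upwards [Real.tendsto_log_atTop.eventually (hlittleO.bound one_pos),
    Real.tendsto_log_atTop.eventually_gt_atTop 0] with x hx hlog
  rw [one_mul, Real.rpow_two, Real.norm_of_nonneg (by positivity),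
    Real.norm_of_nonneg (by positivity)] at hx
  rw [zz, div_le_iff₀ (by positivity)]
  gcongr

end Setup

theorem stmt1_general (δ : ℝ) :
    (∀ x : ℝ, EE δ x (fun b => (countS (zz δ x) b 1 (yy δ x) : ℝ)) =
      sigUpTo (zz δ x) * (yy δ x)) ∧
    (∃ C : ℝ, 0 < C ∧ ∃ x₀ : ℝ, ∀ x ≥ x₀,
      |EE δ x (fun b => ((countS (zz δ x) b 1 (yy δ x) : ℝ)) ^ 2) -
          (sigUpTo (zz δ x) * (yy δ x)) ^ 2| ≤
        C * (sigUpTo (zz δ x) * (yy δ x)) ^ 2 / Real.log (yy δ x)) := by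
  obtain ⟨x₀, hx₀⟩ := Filter.eventually_atTop.1
    ((eventually_two_le_yy δ).and (eventually_zz_le_yy δ))
  exact ⟨EE_countS δ, 8, by norm_num, x₀, fun x hx ↦
    abs_EE_countS_sq_sub_le (hx₀ x hx).1 (hx₀ x hx).2⟩

theorem stmt1 (δ M : ℝ) (K : ℕ) (ξ : ℝ)
    (hδ0 : 0 < δ) (hδ1 : δ < 1/2) (hK : 2 ≤ K) (hξ : 1 < ξ) :
    (∃ x₀ : ℝ, ∀ x ≥ x₀,
      EE δ x (fun b => (countS (zz δ x) b 1 (yy δ x) : ℝ)) =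
        sigUpTo (zz δ x) * (yy δ x)) ∧
    (∃ C : ℝ, 0 < C ∧ ∃ x₀ : ℝ, ∀ x ≥ x₀,
      |EE δ x (fun b => ((countS (zz δ x) b 1 (yy δ x) : ℝ)) ^ 2) -
          (sigUpTo (zz δ x) * (yy δ x)) ^ 2| ≤
        C * (sigUpTo (zz δ x) * (yy δ x)) ^ 2 / Real.log (yy δ x)) := by
  obtain ⟨hmean, hsq⟩ := stmt1_general δ
  exact ⟨⟨0, fun x _ ↦ hmean x⟩, hsq⟩
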